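/- The FK measure is the unique probability measure with the prescribed single-edge conditional probabilities. Let (V, E, ends, α) be a finite graph with boundary condition, p ∈ (0,1), q > 0. Let μ be a probability measure on configurations with μ({ω}) > 0 for every configuration ω, and suppose that for every edge e ∈ E and every η : E∖{e} → Bool, with C_η := {ω : ω e' = η e' for all e' ≠ e}, one has μ(C_η ∩ {ω : ω e = true}) = r · μ(C_η), where r = p if the two endpoints of e are connected in the multigraph on V/α with edge set {e' ≠ e : η e' = true}, and r = p' = p/(p+q(1−p)) otherwise. Then μ = φ^α_{G,p,q}. -/

import Mathlib

open scoped Classical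

noncomputable section

namespace FKPaper

variable {V E : Type*}

/-- One-step adjacency between wired vertices through an edge in `F`. -/
def Step (ends : E → Sym2 V) (α : Setoid V) (F : Set E) (x y : Quotient α) : Prop :=
  ∃ e ∈ F, Sym2.map (Quotient.mk α) (ends e) = s(x, y)

/-- Setoid of connected components of the wired multigraph with edge set `F`. -/
def connSetoid (ends : E → Sym2 V) (α : Setoid V) (F : Set E) : Setoid (Quotient α) :=
  Relation.EqvGen.setoid (Step ends α F)

/-- Connectivity in the wired multigraph with edge set `F`. -/
def Conn (ends : E → Sym2 V) (α : Setoid V) (F : Set E) (x y : Quotient α) : Prop :=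
  (connSetoid ends α F).r x y

/-- The two endpoints of `e` are joined in the wired multigraph with edge set `F`. -/
def EndsConn (ends : E → Sym2 V) (α : Setoid V) (F : Set E) (e : E) : Prop :=
  ∀ x y : V, ends e = s(x, y) → Conn ends α F (Quotient.mk α x) (Quotient.mk α y)

/-- Number of connected components `k(ω, α)`. -/
def numComponents (ends : E → Sym2 V) (α : Setoid V) (ω : E → Bool) : ℕ :=
  Nat.card (Quotient (connSetoid ends α {e | ω e = true}))

/-- `p' = p / (p + q (1 - p))`. -/
def pPrime (p q : ℝ) : ℝ := p / (p + q * (1 - p))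

/-- Total mass of a set under a weight function. -/
def massOf {ι : Type*} [Fintype ι] (w : ι → ℝ) (A : Set ι) : ℝ :=
  ∑ x ∈ Finset.univ.filter (· ∈ A), w x

/-- Normalized probability of a set under a weight function. -/
def probOf {ι : Type*} [Fintype ι] (w : ι → ℝ) (A : Set ι) : ℝ :=
  massOf w A / massOf w Set.univ

/-- FK weight of a configuration. -/
def fkWeight [Fintype E] (ends : E → Sym2 V) (α : Setoid V) (p q : ℝ) (ω : E → Bool) : ℝ :=
  p ^ (Finset.univ.filter fun e => ω e = true).card *
    (1 - p) ^ (Finset.univ.filter fun e => ω e = false).card *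
    q ^ numComponents ends α ω

/-- The FK (random cluster) probability measure `φ^α_{G,p,q}`. -/
def fkProb [Fintype E] (ends : E → Sym2 V) (α : Setoid V) (p q : ℝ)
    (A : Set (E → Bool)) : ℝ :=
  probOf (fkWeight ends α p q) A

/-- Inhomogeneous Bernoulli weight. -/
def berWeight [Fintype E] (pe : E → ℝ) (ω : E → Bool) : ℝ :=
  ∏ e, if ω e = true then pe e else 1 - pe e

/-- Inhomogeneous Bernoulli product measure `P_{(p_e)}`. -/
def berProb [Fintype E] (pe : E → ℝ) (A : Set (E → Bool)) : ℝ :=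
  probOf (berWeight pe) A

/-- Increasing sets of configurations. -/
def Increasing (A : Set (E → Bool)) : Prop :=
  ∀ ⦃ω ω' : E → Bool⦄, ω ∈ A → (∀ e, ω e ≤ ω' e) → ω' ∈ A

/-- Stochastic domination `μ ≼ ν`. -/
def StochDom [Fintype E] (μ ν : Set (E → Bool) → ℝ) : Prop :=
  ∀ A : Set (E → Bool), Increasing A → μ A ≤ ν A

/-- `Q_F(e)`: cutsets for `e` included in `F`. -/
def Cutsets (ends : E → Sym2 V) (α : Setoid V) (F : Set E) (e : E) : Set (Set E) :=
  {χ | χ ⊆ F ∧ ¬ EndsConn ends α {e' | e' ∉ χ ∧ e' ≠ e} e}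


theorem conn_insert_iff (ends : E → Sym2 V) (α : Setoid V) (F : Set E) (e : E) (x y : V)
    (he : ends e = s(x, y)) (u v : Quotient α) :
    Conn ends α (insert e F) u v ↔
      Conn ends α F u v ∨
      (Conn ends α F u (Quotient.mk α x) ∧ Conn ends α F v (Quotient.mk α y)) ∨
      (Conn ends α F u (Quotient.mk α y) ∧ Conn ends α F v (Quotient.mk α x)) := by
  have hr : ∀ a, Conn ends α F a a := fun a => (connSetoid ends α F).refl' a
  have hs : ∀ {a b}, Conn ends α F a b → Conn ends α F b a :=
    fun h => (connSetoid ends α F).symm' h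
  have ht : ∀ {a b c}, Conn ends α F a b → Conn ends α F b c → Conn ends α F a c :=
    fun h h' => (connSetoid ends α F).trans' h h'
  have hr' : ∀ a, Conn ends α (insert e F) a a :=
    fun a => (connSetoid ends α (insert e F)).refl' a
  have hs' : ∀ {a b}, Conn ends α (insert e F) a b → Conn ends α (insert e F) b a :=
    fun h => (connSetoid ends α (insert e F)).symm' h
  have ht' : ∀ {a b c}, Conn ends α (insert e F) a b → Conn ends α (insert e F) b c →
      Conn ends α (insert e F) a c :=
    fun h h' => (connSetoid ends α (insert e F)).trans' h h'
  constructor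
  · intro h
    change Relation.EqvGen (Step ends α (insert e F)) u v at h
    induction h with
    | rel a b hab =>
      obtain ⟨f, hf, hfe⟩ := hab
      rcases hf with rfl | hf
      · rw [he, Sym2.map_mk, Sym2.eq_iff] at hfe
        rcases hfe with ⟨h1, h2⟩ | ⟨h1, h2⟩
        · right; left; rw [← h1, ← h2]; exact ⟨hr _, hr _⟩
        · right; right; rw [← h1, ← h2]; exact ⟨hr _, hr _⟩
      · left; exact Relation.EqvGen.rel _ _ ⟨f, hf, hfe⟩
    | refl a => left; exact hr a
    | symm a b _ ih =>
      rcases ih with h | ⟨h1, h2⟩ | ⟨h1, h2⟩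
      · exact Or.inl (hs h)
      · exact Or.inr (Or.inr ⟨h2, h1⟩)
      · exact Or.inr (Or.inl ⟨h2, h1⟩)
    | trans a b c _ _ ih1 ih2 =>
      rcases ih1 with h | ⟨h1, h2⟩ | ⟨h1, h2⟩ <;> rcases ih2 with k | ⟨k1, k2⟩ | ⟨k1, k2⟩
      · exact Or.inl (ht h k)
      · exact Or.inr (Or.inl ⟨ht h k1, k2⟩)
      · exact Or.inr (Or.inr ⟨ht h k1, k2⟩)
      · exact Or.inr (Or.inl ⟨h1, ht (hs k) h2⟩)
      · exact Or.inl (ht h1 (ht (hs k1) (ht h2 (hs k2))))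
      · exact Or.inl (ht h1 (hs k2))
      · exact Or.inr (Or.inr ⟨h1, ht (hs k) h2⟩)
      · exact Or.inl (ht h1 (hs k2))
      · exact Or.inl (ht h1 (ht (hs k1) (ht h2 (hs k2))))
  · have hmono : ∀ {a b}, Conn ends α F a b → Conn ends α (insert e F) a b := by
      intro a b h
      change Relation.EqvGen (Step ends α F) a b at h
      induction h with
      | rel a b hab =>
        obtain ⟨f, hf, hfe⟩ := hab
        exact Relation.EqvGen.rel _ _ ⟨f, Set.mem_insert_of_mem _ hf, hfe⟩
      | refl a => exact hr' a
      | symm a b _ ih => exact hs' ih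
      | trans a b c _ _ ih1 ih2 => exact ht' ih1 ih2
    have hxy : Conn ends α (insert e F) (Quotient.mk α x) (Quotient.mk α y) :=
      Relation.EqvGen.rel _ _ ⟨e, Set.mem_insert _ _, by rw [he, Sym2.map_mk]⟩
    rintro (h | ⟨h1, h2⟩ | ⟨h1, h2⟩)
    · exact hmono h
    · exact ht' (hmono h1) (ht' hxy (hs' (hmono h2)))
    · exact ht' (hmono h1) (ht' (hs' hxy) (hs' (hmono h2)))

/-- Merging two distinct classes of a setoid lowers the number of classes by one. -/
theorem card_merge {X : Type*} [Finite X] (s t : Setoid X) (a b : X) (hab : ¬ s a b)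
    (h : ∀ u v, t u v ↔ s u v ∨ (s u a ∧ s v b) ∨ (s u b ∧ s v a)) :
    Nat.card (Quotient s) = Nat.card (Quotient t) + 1 := by
  have key : ∀ u v, t u v →
      (if s u b then Quotient.mk s a else Quotient.mk s u) =
      (if s v b then Quotient.mk s a else Quotient.mk s v) := by
    intro u v huv
    rcases (h u v).1 huv with h1 | ⟨h1, h2⟩ | ⟨h1, h2⟩
    · by_cases hu : s u b
      · rw [if_pos hu, if_pos (s.trans' (s.symm' h1) hu)]
      · rw [if_neg hu, if_neg (fun hv => hu (s.trans' h1 hv))]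
        exact Quotient.sound h1
    · rw [if_pos h2, if_neg (fun hu => hab (s.trans' (s.symm' h1) hu))]
      exact Quotient.sound h1
    · rw [if_pos h1, if_neg (fun hu => hab (s.trans' (s.symm' h2) hu))]
      exact (Quotient.sound h2).symm
  let f : Quotient t → Quotient s :=
    Quotient.lift (fun u => if s u b then Quotient.mk s a else Quotient.mk s u) key
  have hf : ∀ u, f (Quotient.mk t u) = if s u b then Quotient.mk s a else Quotient.mk s u :=
    fun u => rfl
  have hinj : Function.Injective f := by
    intro c d
    induction c using Quotient.inductionOn with | _ u => ?_
    induction d using Quotient.inductionOn with | _ v => ?_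
    intro huv
    rw [hf, hf] at huv
    apply Quotient.sound
    apply (h u v).2
    by_cases hu : s u b <;> by_cases hv : s v b
    · exact Or.inl (s.trans' hu (s.symm' hv))
    · rw [if_pos hu, if_neg hv] at huv
      exact Or.inr (Or.inr ⟨hu, s.symm' (Quotient.exact huv)⟩)
    · rw [if_neg hu, if_pos hv] at huv
      exact Or.inr (Or.inl ⟨Quotient.exact huv, hv⟩)
    · rw [if_neg hu, if_neg hv] at huv
      exact Or.inl (Quotient.exact huv)
  have hrange : Set.range f = {Quotient.mk s b}ᶜ := by
    ext c
    induction c using Quotient.inductionOn with | _ v => ?_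
    simp only [Set.mem_range, Set.mem_compl_iff, Set.mem_singleton_iff]
    constructor
    · rintro ⟨d, hd⟩ hv
      induction d using Quotient.inductionOn with | _ u => ?_
      rw [hf, hv] at hd
      by_cases hu : s u b
      · rw [if_pos hu] at hd
        exact hab (Quotient.exact hd)
      · rw [if_neg hu] at hd
        exact hu (Quotient.exact hd)
    · intro hv
      refine ⟨Quotient.mk t v, ?_⟩
      rw [hf, if_neg (fun hh => hv (Quotient.sound hh))]
  have h1 := Set.ncard_add_ncard_compl ({Quotient.mk s b} : Set (Quotient s))
  rw [← hrange, Set.ncard_singleton] at h1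
  have h2 : (Set.range f).ncard = Nat.card (Quotient t) := by
    rw [← Nat.card_coe_set_eq]
    exact Nat.card_range_of_injective hinj
  omega

theorem set_update_true (ω : E → Bool) (e : E) :
    {f | Function.update ω e true f = true} = insert e {e' | e' ≠ e ∧ ω e' = true} := by
  ext f
  by_cases h : f = e
  · subst h; simp
  · simp [h]

theorem set_update_false (ω : E → Bool) (e : E) :
    {f | Function.update ω e false f = true} = {e' | e' ≠ e ∧ ω e' = true} := by
  ext f
  by_cases h : f = e
  · subst h; simp
  · simp [h]

theorem numComponents_update [Finite V] (ends : E → Sym2 V) (α : Setoid V)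
    (ω : E → Bool) (e : E) :
    numComponents ends α (Function.update ω e false) =
      numComponents ends α (Function.update ω e true) +
        if EndsConn ends α {e' | e' ≠ e ∧ ω e' = true} e then 0 else 1 := by
  unfold numComponents
  rw [set_update_true, set_update_false]
  set F : Set E := {e' | e' ≠ e ∧ ω e' = true} with hF
  obtain ⟨x, y, he⟩ : ∃ x y, ends e = s(x, y) := by
    induction h : ends e using Sym2.inductionOn with | _ x y => exact ⟨x, y, rfl⟩
  have hiff := conn_insert_iff ends α F e x y he
  have hs : ∀ {a b}, Conn ends α F a b → Conn ends α F b a :=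
    fun h => (connSetoid ends α F).symm' h
  have ht : ∀ {a b c}, Conn ends α F a b → Conn ends α F b c → Conn ends α F a c :=
    fun h h' => (connSetoid ends α F).trans' h h'
  split_ifs with hc
  · have hxy := hc x y he
    have : connSetoid ends α (insert e F) = connSetoid ends α F := by
      apply Setoid.ext
      intro u v
      refine (hiff u v).trans ⟨?_, Or.inl⟩
      rintro (h | ⟨h1, h2⟩ | ⟨h1, h2⟩)
      · exact h
      · exact ht h1 (ht hxy (hs h2))
      · exact ht h1 (ht (hs hxy) (hs h2))
    rw [this, add_zero]
  · have hxy : ¬ Conn ends α F (Quotient.mk α x) (Quotient.mk α y) := by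
      intro h
      apply hc
      intro x' y' he'
      rw [he, Sym2.eq_iff] at he'
      rcases he' with ⟨rfl, rfl⟩ | ⟨rfl, rfl⟩
      · exact h
      · exact hs h
    exact card_merge _ _ _ _ hxy hiff

theorem card_update_true [Fintype E] (ω : E → Bool) (e : E) :
    (Finset.univ.filter fun f => Function.update ω e true f = true).card =
    (Finset.univ.filter fun f => Function.update ω e false f = true).card + 1 := by
  have : (Finset.univ.filter fun f => Function.update ω e true f = true) =
      insert e (Finset.univ.filter fun f => Function.update ω e false f = true) := by
    ext f
    by_cases h : f = e
    · subst h; simp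
    · simp [h]
  rw [this, Finset.card_insert_of_notMem (by simp)]

theorem card_update_false [Fintype E] (ω : E → Bool) (e : E) :
    (Finset.univ.filter fun f => Function.update ω e false f = false).card =
    (Finset.univ.filter fun f => Function.update ω e true f = false).card + 1 := by
  have : (Finset.univ.filter fun f => Function.update ω e false f = false) =
      insert e (Finset.univ.filter fun f => Function.update ω e true f = false) := by
    ext f
    by_cases h : f = e
    · subst h; simp
    · simp [h]
  rw [this, Finset.card_insert_of_notMem (by simp)]

theorem fkWeight_update [Finite V] [Fintype E] (ends : E → Sym2 V) (α : Setoid V)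
    (p q : ℝ) (ω : E → Bool) (e : E) :
    fkWeight ends α p q (Function.update ω e true) * (1 - p) *
      (if EndsConn ends α {e' | e' ≠ e ∧ ω e' = true} e then 1 else q) =
    fkWeight ends α p q (Function.update ω e false) * p := by
  unfold fkWeight
  rw [numComponents_update, card_update_true, card_update_false]
  split_ifs <;> ring

theorem fkWeight_pos [Fintype E] (ends : E → Sym2 V) (α : Setoid V)
    (p q : ℝ) (hp : p ∈ Set.Ioo (0 : ℝ) 1) (hq : 0 < q) (ω : E → Bool) :
    0 < fkWeight ends α p q ω := by
  have h1 := hp.1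
  have h2 : 0 < 1 - p := sub_pos.2 hp.2
  unfold fkWeight
  positivity

theorem massOf_eq {ι : Type*} [Fintype ι] (w : ι → ℝ) (A : Set ι) (S : Finset ι)
    (h : ∀ x, x ∈ A ↔ x ∈ S) : massOf w A = ∑ x ∈ S, w x := by
  unfold massOf
  apply Finset.sum_congr _ fun _ _ => rfl
  ext x
  simp [h x]

theorem mem_cyl [Fintype E] (ω : E → Bool) (e : E) (ω' : E → Bool) :
    ω' ∈ {ω' : E → Bool | ∀ e' ≠ e, ω' e' = ω e'} ↔
      ω' ∈ ({Function.update ω e true, Function.update ω e false} : Finset (E → Bool)) := by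
  simp only [Set.mem_ofPred_eq,
    Finset.mem_insert, Finset.mem_singleton, Function.eq_update_iff]
  cases h : ω' e <;> simp

theorem mem_cyl_true (ω : E → Bool) (e : E) (ω' : E → Bool) :
    ω' ∈ ({ω' : E → Bool | ∀ e' ≠ e, ω' e' = ω e'} ∩ {ω' | ω' e = true}) ↔
      ω' ∈ ({Function.update ω e true} : Finset (E → Bool)) := by
  simp only [Set.mem_ofPred_eq,
    Set.mem_inter_iff, Finset.mem_singleton, Function.eq_update_iff]
  exact and_comm

theorem const_of_update [Fintype E] (f : (E → Bool) → ℝ)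
    (h : ∀ ω e, f (Function.update ω e true) = f (Function.update ω e false))
    (ω : E → Bool) : f ω = f (fun _ => false) := by
  have key : ∀ (s : Finset E), f ω = f (fun e => if e ∈ s then false else ω e) := by
    intro s
    induction s using Finset.induction_on with
    | empty => simp
    | insert a s ha ih =>
      rw [ih]
      have h1 : (fun e => if e ∈ insert a s then false else ω e) =
          Function.update (fun e => if e ∈ s then false else ω e) a false := by
        ext e
        by_cases hea : e = a
        · subst hea; simp
        · simp [hea]
      rw [h1]
      set g : E → Bool := fun e => if e ∈ s then false else ω e
      cases hg : g a
      · rw [← hg, Function.update_eq_self]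
      · rw [← h, ← hg, Function.update_eq_self]
  simpa using key Finset.univ

/-- **The FK measure is the unique probability measure with the prescribed single-edge
conditional probabilities.** -/
theorem fk_unique_of_conditional
    {V E : Type*} [Fintype V] [Fintype E]
    (ends : E → Sym2 V) (α : Setoid V)
    (p q : ℝ) (hp : p ∈ Set.Ioo (0 : ℝ) 1) (hq : 0 < q)
    (μ : (E → Bool) → ℝ)
    (hpos : ∀ ω, 0 < μ ω) (hsum : ∑ ω, μ ω = 1)
    (hcond : ∀ (e : E) (η : E → Bool),
      massOf μ ({ω | ∀ e' ≠ e, ω e' = η e'} ∩ {ω | ω e = true})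
        = (if EndsConn ends α {e' | e' ≠ e ∧ η e' = true} e then p else pPrime p q) *
            massOf μ {ω | ∀ e' ≠ e, ω e' = η e'}) :
    ∀ ω : E → Bool, μ ω = fkProb ends α p q {ω} := by
  have hw := fkWeight_pos ends α p q hp hq
  have hp0 := hp.1
  have hp1 : 0 < 1 - p := sub_pos.2 hp.2
  have hstep : ∀ ω e, μ (Function.update ω e true) / fkWeight ends α p q (Function.update ω e true)
      = μ (Function.update ω e false) / fkWeight ends α p q (Function.update ω e false) := by
    intro ω e
    have h1 := hcond e ω
    have h2 := fkWeight_update ends α p q ω e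
    have hne : Function.update ω e true ≠ Function.update ω e false := by
      intro h
      have := congrFun h e
      simp at this
    rw [massOf_eq μ _ _ (mem_cyl ω e), massOf_eq μ _ _ (mem_cyl_true ω e), Finset.sum_singleton, Finset.sum_pair hne] at h1
    have w1 := hw (Function.update ω e true)
    have w2 := hw (Function.update ω e false)
    rw [div_eq_div_iff w1.ne' w2.ne']
    generalize fkWeight ends α p q (Function.update ω e true) = A at *
    generalize fkWeight ends α p q (Function.update ω e false) = B at *
    generalize μ (Function.update ω e true) = a at *
    generalize μ (Function.update ω e false) = b at *
    apply mul_right_cancel₀ hp0.ne'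
    split_ifs at h1 h2
    · linear_combination (-a) * h2 + A * h1
    · have hd : 0 < p + q * (1 - p) := by positivity
      unfold pPrime at h1
      rw [div_mul_eq_mul_div, eq_div_iff hd.ne'] at h1
      linear_combination (-a) * h2 + A * h1
  have hc := const_of_update (fun ω => μ ω / fkWeight ends α p q ω) hstep
  set c := μ (fun _ => false) / fkWeight ends α p q (fun _ => false)
  have hμ : ∀ ω, μ ω = c * fkWeight ends α p q ω := fun ω => (div_eq_iff (hw ω).ne').1 (hc ω)
  have hZ : c * ∑ ω, fkWeight ends α p q ω = 1 := by
    rw [Finset.mul_sum, ← hsum]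
    exact Finset.sum_congr rfl fun ω _ => (hμ ω).symm
  have hZ0 : ∑ ω, fkWeight ends α p q ω ≠ 0 := fun h => by simp [h] at hZ
  intro ω
  unfold fkProb probOf
  rw [massOf_eq _ {ω} {ω} (by simp), massOf_eq _ Set.univ Finset.univ (by simp),
    Finset.sum_singleton, eq_div_iff hZ0, hμ]
  linear_combination fkWeight ends α p q ω * hZ

end FKPaper
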